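/- There exist δ ∈ (θ/2, 1/2 − θ), ε > 0 and a subset S' ⊆ S of density 1 in S such that for every ε' > 0 there is C > 0 with the following property: for every n_k ∈ S' and every ζ ∈ ℤ²∖{0} with |ζ| ≤ n_k^ε, setting L₀ = n_k^δ, one has Σ(ζ, n_k) := Σ_{ξ ∈ A(n_k,L₀), 4π²|ξ+ζ|² < n_k} (4π²|ξ+ζ|² − n_k)^{−2} + Σ_{ξ ∈ A(n_k,L₀), 4π²|ξ+ζ|² > n_{k+1}} (4π²|ξ+ζ|² − n_{k+1})^{−2} ≤ C · n_k^{θ − 2δ + ε'}. -/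

import Mathlib

open Real MeasureTheory Filter Finset

noncomputable section

/-- `m` is a sum of two integer squares. -/
def IsSum2Sq (m : ℕ) : Prop := ∃ a b : ℤ, (m : ℤ) = a ^ 2 + b ^ 2

/-- The increasing enumeration `n₀ < n₁ < ⋯` of `S = {4π²m : m a sum of two squares}`. -/
noncomputable def nseq (k : ℕ) : ℝ := 4 * Real.pi ^ 2 * (Nat.nth IsSum2Sq k)

/-- The set `S` of Laplace eigenvalues of the standard torus. -/
def Sset : Set ℝ := Set.range nseq

/-- The number of elements of `S'` (a subset of `S`) that are `≤ X`. -/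
noncomputable def countLE (S' : Set ℝ) (X : ℝ) : ℕ :=
  Nat.card {k : ℕ // nseq k ∈ S' ∧ nseq k ≤ X}

/-- `S' ⊆ S` has density one in `S`. -/
def HasDensityOne (S' : Set ℝ) : Prop :=
  Tendsto (fun X : ℝ => (countLE S' X : ℝ) / (countLE Sset X)) atTop (nhds 1)

/-- The Euclidean norm of a lattice vector. -/
noncomputable def znorm (ξ : Fin 2 → ℤ) : ℝ := Real.sqrt (∑ i, (ξ i : ℝ) ^ 2)

/-- Huxley's exponent in the circle law. -/
noncomputable def θH : ℝ := 133 / 416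

/-- `4π²|ξ|²`. -/
noncomputable def qf (ξ : Fin 2 → ℤ) : ℝ := 4 * Real.pi ^ 2 * ∑ i, (ξ i : ℝ) ^ 2

/-- The deterministic lattice sum `Σ(ζ, n_k)`, with `L₀ = n_k^δ`. -/
noncomputable def SigmaSum (ζ : Fin 2 → ℤ) (nk nk1 L0 : ℝ) : ℝ :=
  (∑' ξ : Fin 2 → ℤ,
      if |qf ξ - nk| ≤ L0 ∧ qf (ξ + ζ) < nk then ((qf (ξ + ζ) - nk) ^ 2)⁻¹ else 0)
  + ∑' ξ : Fin 2 → ℤ,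
      if |qf ξ - nk| ≤ L0 ∧ nk1 < qf (ξ + ζ) then ((qf (ξ + ζ) - nk1) ^ 2)⁻¹ else 0


/-- Pairs with bounded product. -/
def pairsLE (M : ℕ) : Finset (ℕ × ℕ) :=
  ((Icc 1 M) ×ˢ (Icc 1 M)).filter fun p => p.1 * p.2 ≤ M

/-- Solutions of `x y = z w` in a box. -/
def mulQuads (M : ℕ) : Finset ((ℕ × ℕ) × (ℕ × ℕ)) :=
  (((Icc 1 M) ×ˢ (Icc 1 M)) ×ˢ ((Icc 1 M) ×ˢ (Icc 1 M))).filter fun p => p.1.1 * p.1.2 = p.2.1 * p.2.2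

lemma mulQuads_card (M : ℕ) : (mulQuads M).card ≤ (pairsLE M).card ^ 2 := by
  have : mulQuads M ⊆ ((pairsLE M) ×ˢ (pairsLE M)).image
      (fun p => ((p.1.1 * p.1.2, p.2.1 * p.2.2), (p.1.1 * p.2.1, p.1.2 * p.2.2))) := by
    rintro ⟨⟨x, y⟩, ⟨z, w⟩⟩ h
    simp only [mulQuads, mem_filter, mem_product, Finset.mem_Icc] at h
    obtain ⟨⟨⟨⟨hx, hx'⟩, hy, hy'⟩, ⟨hz, hz'⟩, hw, hw'⟩, he⟩ := h
    obtain ⟨g, u, v, hg, huv, rfl, rfl⟩ := Nat.exists_coprime' (m := x) (n := z)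
      (Nat.gcd_pos_of_pos_left _ hx)
    have he2 : u * y = v * w := by
      apply Nat.eq_of_mul_eq_mul_left hg
      calc g * (u * y) = u * g * y := by ring
        _ = v * g * w := he
        _ = _ := by ring
    have hvy : v ∣ y := huv.symm.dvd_of_dvd_mul_left (he2 ▸ dvd_mul_right v w)
    obtain ⟨h, rfl⟩ := hvy
    have hv : 0 < v := Nat.pos_of_mul_pos_right hz
    have hu : 0 < u := Nat.pos_of_mul_pos_right hx
    have hh : 0 < h := Nat.pos_of_mul_pos_left hy
    have hw2 : w = u * h := by
      apply Nat.eq_of_mul_eq_mul_left hv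
      rw [← he2]; ring
    subst hw2
    simp only [mem_image, mem_product, pairsLE, mem_filter, Finset.mem_Icc, Prod.exists, Prod.mk.injEq]
    refine ⟨g, u, v, h, ⟨⟨⟨⟨hg, ?_⟩, hu, ?_⟩, ?_⟩, ⟨⟨hv, ?_⟩, hh, ?_⟩, ?_⟩, ⟨by ring, rfl⟩, by ring, rfl⟩ <;> nlinarith
  calc _ ≤ _ := card_le_card this
    _ ≤ _ := card_image_le
    _ = _ := by rw [card_product, sq]

lemma pairsLE_card (M : ℕ) : ((pairsLE M).card : ℝ) ≤ M * (1 + Real.log M) := by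
  have h1 : (pairsLE M).card ≤ ∑ g ∈ Icc 1 M, M / g := by
    have : pairsLE M ⊆ (Icc 1 M).biUnion (fun g => (Icc 1 (M / g)).image (fun u => (g, u))) := by
      rintro ⟨g, u⟩ h
      simp only [pairsLE, mem_filter, mem_product, Finset.mem_Icc] at h
      simp only [mem_biUnion, mem_image, Finset.mem_Icc, Prod.mk.injEq]
      refine ⟨g, h.1.1, u, ⟨h.1.2.1, ?_⟩, rfl, rfl⟩
      rw [Nat.le_div_iff_mul_le h.1.1.1]
      linarith [h.2, mul_comm g u]
    refine (card_le_card this).trans (card_biUnion_le.trans (sum_le_sum fun g _ => ?_))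
    exact card_image_le.trans (by simp)
  calc ((pairsLE M).card : ℝ) ≤ ((∑ g ∈ Icc 1 M, M / g : ℕ) : ℝ) := by exact_mod_cast h1
    _ ≤ ∑ g ∈ Icc 1 M, (M : ℝ) * ((g : ℝ)⁻¹) := by
        push_cast
        exact sum_le_sum fun g _ => by rw [← div_eq_mul_inv]; exact Nat.cast_div_le
    _ = M * ((harmonic M : ℚ) : ℝ) := by
        rw [← mul_sum, harmonic_eq_sum_Icc]; push_cast; rfl
    _ ≤ _ := by gcongr; exact harmonic_le_one_add_log M

/-- Squares up to `N²`. -/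
def sqs (N : ℕ) : Finset ℕ := (Icc 1 N).image (fun a => a ^ 2)

lemma sqs_card (N : ℕ) : (sqs N).card = N := by
  rw [sqs, card_image_of_injective _ (Nat.pow_left_injective (by norm_num))]
  simp

/-- solutions with `a > c`. -/
def sqQuads (N : ℕ) : Finset ((ℕ × ℕ) × (ℕ × ℕ)) :=
  (((Icc 1 N) ×ˢ (Icc 1 N)) ×ˢ ((Icc 1 N) ×ˢ (Icc 1 N))).filter
    fun p => p.1.1 ^ 2 + p.2.1 ^ 2 = p.1.2 ^ 2 + p.2.2 ^ 2 ∧ p.1.2 < p.1.1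

lemma sqQuads_card (N : ℕ) : (sqQuads N).card ≤ (mulQuads (2 * N)).card := by
  apply card_le_card_of_injOn
    (fun p => ((p.1.1 - p.1.2, p.1.1 + p.1.2), (p.2.2 - p.2.1, p.2.2 + p.2.1)))
  · rintro ⟨⟨a, c⟩, ⟨b, d⟩⟩ h
    simp only [sqQuads, coe_filter, mem_product, Finset.mem_Icc, Set.mem_ofPred_eq] at h
    obtain ⟨⟨⟨⟨ha, ha'⟩, hc, hc'⟩, ⟨hb, hb'⟩, hd, hd'⟩, he, hlt⟩ := h
    have hbd : b < d := by
      by_contra hcon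
      push Not at hcon
      nlinarith
    simp only [mulQuads, coe_filter, mem_product, Finset.mem_Icc, Set.mem_ofPred_eq]
    refine ⟨by omega, ?_⟩
    obtain ⟨x, rfl⟩ := Nat.exists_eq_add_of_lt hlt
    obtain ⟨y, rfl⟩ := Nat.exists_eq_add_of_lt hbd
    have e1 : c + x + 1 - c = x + 1 := by omega
    have e2 : b + y + 1 - b = y + 1 := by omega
    rw [e1, e2]
    nlinarith
  · rintro ⟨⟨a, c⟩, ⟨b, d⟩⟩ h ⟨⟨a', c'⟩, ⟨b', d'⟩⟩ h' he
    simp only [sqQuads, coe_filter, mem_product, Finset.mem_Icc, Set.mem_ofPred_eq] at h h'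
    have hbd : b < d := by
      by_contra hcon
      push Not at hcon
      nlinarith
    have hbd' : b' < d' := by
      by_contra hcon
      push Not at hcon
      nlinarith
    simp only [Prod.mk.injEq] at he ⊢
    omega

lemma energy_le (N : ℕ) : addEnergy (sqs N) (sqs N) ≤ N ^ 2 + 2 * (mulQuads (2 * N)).card := by
  have hsub : (((sqs N ×ˢ sqs N) ×ˢ sqs N ×ˢ sqs N).filter
      fun x => x.1.1 + x.2.1 = x.1.2 + x.2.2) ⊆
      (((Icc 1 N) ×ˢ (Icc 1 N)).image fun p => ((p.1 ^ 2, p.1 ^ 2), (p.2 ^ 2, p.2 ^ 2))) ∪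
      (((sqQuads N).image fun p => ((p.1.1 ^ 2, p.1.2 ^ 2), (p.2.1 ^ 2, p.2.2 ^ 2))) ∪
      ((sqQuads N).image fun p => ((p.1.2 ^ 2, p.1.1 ^ 2), (p.2.2 ^ 2, p.2.1 ^ 2)))) := by
    rintro ⟨⟨a, c⟩, ⟨b, d⟩⟩ h
    simp only [sqs, mem_filter, mem_product, mem_image] at h
    obtain ⟨⟨⟨⟨a, ha, rfl⟩, ⟨c, hc, rfl⟩⟩, ⟨⟨b, hb, rfl⟩, ⟨d, hd, rfl⟩⟩⟩, he⟩ := h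
    rcases lt_trichotomy a c with hac | hac | hac
    · apply mem_union_right
      apply mem_union_right
      refine mem_image.2 ⟨((c, a), (d, b)), ?_, rfl⟩
      simp only [sqQuads, mem_filter, mem_product]
      exact ⟨⟨⟨hc, ha⟩, hd, hb⟩, he.symm, hac⟩
    · apply mem_union_left
      subst hac
      have hbd : b = d := by
        have : b ^ 2 = d ^ 2 := by omega
        exact Nat.pow_left_injective (n := 2) (by norm_num) this
      subst hbd
      exact mem_image.2 ⟨(a, b), mem_product.2 ⟨ha, hb⟩, rfl⟩
    · apply mem_union_right
      apply mem_union_left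
      refine mem_image.2 ⟨((a, c), (b, d)), ?_, rfl⟩
      simp only [sqQuads, mem_filter, mem_product]
      exact ⟨⟨⟨ha, hc⟩, hb, hd⟩, he, hac⟩
  have h1 : addEnergy (sqs N) (sqs N) ≤ _ := card_le_card hsub
  refine h1.trans ((card_union_le _ _).trans ?_)
  refine add_le_add (card_image_le.trans (by simp [sq])) ?_
  refine (card_union_le _ _).trans ?_
  rw [two_mul]
  exact add_le_add (card_image_le.trans (sqQuads_card N)) (card_image_le.trans (sqQuads_card N))

open scoped Pointwise in
/-- Lower bound for the number of sums of two squares. -/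
lemma sumset_card (N : ℕ) (hN : 1 ≤ N) :
    (N : ℝ) ^ 2 ≤ ((sqs N + sqs N).card : ℝ) * (9 * (1 + Real.log (2 * N)) ^ 2) := by
  have h := le_card_add_mul_addEnergy (sqs N) (sqs N)
  rw [sqs_card] at h
  have h2 : (addEnergy (sqs N) (sqs N) : ℝ) ≤ (N : ℝ) ^ 2 * (9 * (1 + Real.log (2 * N)) ^ 2) := by
    have e := energy_le N
    have e1 := mulQuads_card (2 * N)
    have e2 := pairsLE_card (2 * N)
    push_cast at e2
    have e3 : (addEnergy (sqs N) (sqs N) : ℝ) ≤ (N : ℝ) ^ 2 + 2 * ((pairsLE (2 * N)).card : ℝ) ^ 2 := by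
      exact_mod_cast e.trans (by gcongr)
    have hl : 0 ≤ Real.log (2 * N) := Real.log_nonneg (by
      have : (1 : ℝ) ≤ N := by exact_mod_cast hN
      linarith)
    have e4 : ((pairsLE (2 * N)).card : ℝ) ^ 2 ≤ (2 * N * (1 + Real.log (2 * N))) ^ 2 := by
      gcongr
    have e5 : (N : ℝ) ^ 2 ≤ (N : ℝ) ^ 2 * (1 + Real.log (2 * N)) ^ 2 := by
      apply le_mul_of_one_le_right (by positivity)
      nlinarith
    nlinarith
  have h3 : (N : ℝ) ^ 2 * (N : ℝ) ^ 2 ≤ ((sqs N + sqs N).card : ℝ) * addEnergy (sqs N) (sqs N) := by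
    exact_mod_cast h
  have hN' : (0 : ℝ) < (N : ℝ) ^ 2 := by positivity
  have : (N : ℝ) ^ 2 * (N : ℝ) ^ 2 ≤ (N : ℝ) ^ 2 * (((sqs N + sqs N).card : ℝ) * (9 * (1 + Real.log (2 * N)) ^ 2)) := by
    refine h3.trans ?_
    calc _ ≤ ((sqs N + sqs N).card : ℝ) * ((N : ℝ) ^ 2 * (9 * (1 + Real.log (2 * N)) ^ 2)) := by gcongr
      _ = _ := by ring
  exact le_of_mul_le_mul_left this hN'

lemma sum2Sq_infinite : (Set.ofPred IsSum2Sq).Infinite := by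
  have : Set.range (fun a : ℕ => a ^ 2) ⊆ Set.ofPred IsSum2Sq := by
    rintro _ ⟨a, rfl⟩
    exact ⟨a, 0, by push_cast; ring⟩
  exact (Set.infinite_range_of_injective (Nat.pow_left_injective (n := 2) (by norm_num))).mono this

lemma four_pi_sq_lb : (36 : ℝ) ≤ 4 * Real.pi ^ 2 := by
  have := Real.pi_gt_three
  nlinarith

lemma four_pi_sq_ub : 4 * Real.pi ^ 2 ≤ (40 : ℝ) := by
  have := Real.pi_lt_d2
  have := Real.pi_gt_three
  nlinarith

lemma nth_le_nseq (k : ℕ) : 36 * (Nat.nth IsSum2Sq k : ℝ) ≤ nseq k := by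
  unfold nseq
  have := four_pi_sq_lb
  gcongr

lemma card_le_of_nth {P : ℕ → Prop} (T : Finset ℤ)
    (h : ∀ k, P k → (Nat.nth IsSum2Sq k : ℤ) ∈ T) : Nat.card {k // P k} ≤ T.card := by
  have : Function.Injective (fun k : {k // P k} => (⟨_, h k.1 k.2⟩ : {m // m ∈ T})) := by
    intro a b hab
    simp only [Subtype.mk.injEq, Nat.cast_inj] at hab
    exact Subtype.ext (Nat.nth_injective sum2Sq_infinite hab)
  simpa using Nat.card_le_card_of_injective _ this

lemma nseq_le_finite (X : ℝ) : {k : ℕ | nseq k ≤ X}.Finite := by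
  apply (Set.finite_Iic ⌊X⌋₊).subset
  intro k hk
  have hk' : nseq k ≤ X := hk
  have h1 := nth_le_nseq k
  have h2 : k ≤ Nat.nth IsSum2Sq k := (Nat.nth_strictMono sum2Sq_infinite).le_apply
  have h3 : (k : ℝ) ≤ Nat.nth IsSum2Sq k := by exact_mod_cast h2
  have h4 : (0 : ℝ) ≤ k := by positivity
  exact Nat.le_floor (by linarith)

open scoped Pointwise in
lemma total_ge (X : ℝ) (N : ℕ) (hN : 81 * (N : ℝ) ^ 2 ≤ X) :
    (sqs N + sqs N).card ≤ countLE Sset X := by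
  classical
  have hmem : ∀ m ∈ sqs N + sqs N, IsSum2Sq m ∧ (m : ℝ) ≤ 2 * N ^ 2 := by
    intro m hm
    obtain ⟨a, ha, b, hb, rfl⟩ := mem_add.1 hm
    simp only [sqs, mem_image, Finset.mem_Icc] at ha hb
    obtain ⟨a, ha, rfl⟩ := ha
    obtain ⟨b, hb, rfl⟩ := hb
    refine ⟨⟨a, b, by push_cast; ring⟩, ?_⟩
    have : a ^ 2 + b ^ 2 ≤ 2 * N ^ 2 := by nlinarith
    exact_mod_cast this
  have key : ∀ m ∈ sqs N + sqs N, nseq (Nat.count IsSum2Sq m) ∈ Sset ∧ nseq (Nat.count IsSum2Sq m) ≤ X := by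
    intro m hm
    refine ⟨⟨_, rfl⟩, ?_⟩
    rw [nseq, Nat.nth_count (hmem m hm).1]
    have h := (hmem m hm).2
    have h2 : 4 * Real.pi ^ 2 ≤ (40 : ℝ) := four_pi_sq_ub
    calc 4 * Real.pi ^ 2 * (m : ℝ) ≤ 40 * (2 * N ^ 2) := by gcongr
      _ ≤ X := by nlinarith [sq_nonneg (N : ℝ)]
  have hfin : Finite {k : ℕ // nseq k ∈ Sset ∧ nseq k ≤ X} :=
    ((nseq_le_finite X).subset (fun k hk => hk.2) : {k : ℕ | nseq k ∈ Sset ∧ nseq k ≤ X}.Finite)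
  have hinj : Function.Injective (fun m : {m // m ∈ sqs N + sqs N} =>
      (⟨Nat.count IsSum2Sq m.1, key m.1 m.2⟩ : {k : ℕ // nseq k ∈ Sset ∧ nseq k ≤ X})) := by
    intro a b hab
    simp only [Subtype.mk.injEq] at hab
    apply Subtype.ext
    rw [← Nat.nth_count (hmem a.1 a.2).1, hab, Nat.nth_count (hmem b.1 b.2).1]
  have := Nat.card_le_card_of_injective _ hinj
  rw [countLE]
  simpa using this

lemma total_lower : ∀ᶠ X : ℝ in atTop, X ^ (99 / 100 : ℝ) / 2916 ≤ (countLE Sset X : ℝ) := by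
  have hlog : ∀ᶠ X : ℝ in atTop, 1 + Real.log X ≤ X ^ (1 / 200 : ℝ) := by
    have h1 := (isLittleO_log_rpow_atTop (r := 1 / 200) (by norm_num)).bound (c := 1 / 2) (by norm_num)
    have h2 := (tendsto_rpow_atTop (y := 1 / 200) (by norm_num)).eventually_ge_atTop 2
    filter_upwards [h1, h2, eventually_ge_atTop 1] with X h1 h2 h3
    rw [Real.norm_of_nonneg (Real.log_nonneg h3), Real.norm_of_nonneg (by positivity)] at h1
    linarith
  filter_upwards [hlog, eventually_ge_atTop 1000] with X hl hX
  set N := ⌊Real.sqrt X / 9⌋₊ with hNdef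
  have hX0 : 0 ≤ X := by linarith
  have hs : Real.sqrt X ^ 2 = X := Real.sq_sqrt hX0
  have hs0 : 0 ≤ Real.sqrt X := Real.sqrt_nonneg X
  have hs18 : 18 ≤ Real.sqrt X := Real.le_sqrt_of_sq_le (by linarith)
  have hN1 : (N : ℝ) ≤ Real.sqrt X / 9 := Nat.floor_le (by positivity)
  have hN2 : Real.sqrt X / 9 < N + 1 := Nat.lt_floor_add_one _
  have hN3 : Real.sqrt X / 18 ≤ N := by linarith
  have hN4 : (1 : ℝ) ≤ N := by linarith
  have hN5 : 1 ≤ N := by exact_mod_cast hN4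
  have t := total_ge X N (by nlinarith)
  have u := sumset_card N hN5
  have hlog2 : Real.log (2 * N) ≤ Real.log X := by
    apply Real.log_le_log (by positivity)
    nlinarith
  have hlog0 : 0 ≤ Real.log (2 * N) := Real.log_nonneg (by linarith)
  have h1 : (1 + Real.log (2 * N)) ^ 2 ≤ X ^ (1 / 100 : ℝ) := by
    calc (1 + Real.log (2 * N)) ^ 2 ≤ (X ^ (1 / 200 : ℝ)) ^ 2 := by gcongr; linarith
      _ = _ := by rw [← Real.rpow_natCast, ← Real.rpow_mul hX0]; norm_num
  have h2 : X / 324 ≤ (countLE Sset X : ℝ) * (9 * X ^ (1 / 100 : ℝ)) := by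
    calc X / 324 ≤ (N : ℝ) ^ 2 := by nlinarith
      _ ≤ _ := u
      _ ≤ _ := by
        have t' := (Nat.cast_le (α := ℝ)).2 t
        gcongr
  have h3 : X ^ (99 / 100 : ℝ) * X ^ (1 / 100 : ℝ) = X := by
    rw [← Real.rpow_add (by linarith)]; norm_num
  have h4 : 0 < X ^ (1 / 100 : ℝ) := by positivity
  apply le_of_mul_le_mul_right _ h4
  calc X ^ (99 / 100 : ℝ) / 2916 * X ^ (1 / 100 : ℝ) = (X ^ (99 / 100 : ℝ) * X ^ (1 / 100 : ℝ)) / 2916 := by ring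
    _ = X / 2916 := by rw [h3]
    _ ≤ _ := by linarith

/-- Integer points of `[-y, y]`. -/
def sIcc (y : ℝ) : Finset ℤ := Icc (-⌊y⌋) ⌊y⌋

lemma mem_sIcc {y : ℝ} {a : ℤ} (h : |(a : ℝ)| ≤ y) : a ∈ sIcc y := by
  rw [abs_le] at h
  have h1 : a ≤ ⌊y⌋ := Int.le_floor.2 h.2
  have h2 : -a ≤ ⌊y⌋ := Int.le_floor.2 (by push_cast; linarith)
  rw [sIcc, Finset.mem_Icc]
  omega

lemma card_sIcc {y : ℝ} (h : 1 ≤ y) : ((sIcc y).card : ℝ) ≤ 3 * y := by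
  have h0 : (1 : ℤ) ≤ ⌊y⌋ := Int.le_floor.2 (by simpa using h)
  have h1 : (⌊y⌋ : ℝ) ≤ y := Int.floor_le y
  have h2 : ((sIcc y).card : ℤ) = 2 * ⌊y⌋ + 1 := by
    rw [sIcc, Int.card_Icc, Int.toNat_of_nonneg (by omega)]; ring
  have h3 : ((sIcc y).card : ℝ) = 2 * ⌊y⌋ + 1 := by exact_mod_cast h2
  rw [h3]; linarith

/-- The good elements. -/
def GoodPt (x : ℝ) : Prop :=
  (3 : ℝ) ^ 20 ≤ x ∧ ∀ ζ : Fin 2 → ℤ, ζ ≠ 0 → znorm ζ ≤ x ^ (1 / 100 : ℝ) →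
    ∀ ξ : Fin 2 → ℤ, |qf ξ - x| ≤ x ^ (4 / 25 : ℝ) →
      x ^ (3 / 10 : ℝ) ≤ |((ξ 0 * ζ 0 + ξ 1 * ζ 1 : ℤ) : ℝ)|

/-- Reconstruction map for bad elements. -/
def badMap (p : (ℤ × ℤ) × (ℤ × ℤ × ℤ)) : ℤ :=
  if p.1.2 = 0 then (p.2.2.1 / p.1.1) ^ 2 + p.2.1 ^ 2 + p.2.2.2
  else p.2.1 ^ 2 + ((p.2.2.1 - p.2.1 * p.1.1) / p.1.2) ^ 2 + p.2.2.2

lemma abs_le_znorm (ζ : Fin 2 → ℤ) (i : Fin 2) : |(ζ i : ℝ)| ≤ znorm ζ := by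
  apply Real.abs_le_sqrt
  exact single_le_sum (f := fun i => (ζ i : ℝ) ^ 2) (fun _ _ => sq_nonneg _) (mem_univ i)

lemma coord_bound {x : ℝ} (hx : 1 ≤ x) (ξ : Fin 2 → ℤ) (h : |qf ξ - x| ≤ x ^ (4 / 25 : ℝ)) (i : Fin 2) :
    |(ξ i : ℝ)| ≤ x ^ (1 / 2 : ℝ) := by
  rw [← Real.sqrt_eq_rpow]
  apply Real.abs_le_sqrt
  have h1 : (ξ i : ℝ) ^ 2 ≤ ∑ j, (ξ j : ℝ) ^ 2 :=
    single_le_sum (f := fun i => (ξ i : ℝ) ^ 2) (fun _ _ => sq_nonneg _) (mem_univ i)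
  have h2 : x ^ (4 / 25 : ℝ) ≤ x := by
    calc _ ≤ x ^ (1 : ℝ) := Real.rpow_le_rpow_of_exponent_le hx (by norm_num)
      _ = x := Real.rpow_one x
  have h3 := (abs_le.1 h).2
  have h4 : 36 * ∑ j, (ξ j : ℝ) ^ 2 ≤ qf ξ := by
    unfold qf
    have := four_pi_sq_lb
    have : 0 ≤ ∑ j, (ξ j : ℝ) ^ 2 := sum_nonneg fun _ _ => sq_nonneg _
    gcongr
  linarith

lemma bad_upper (X : ℝ) (hX : 1 ≤ X) :
    (Nat.card {k : ℕ // nseq k ≤ X ∧ ¬ GoodPt (nseq k)} : ℝ) ≤ 243 * X ^ (98 / 100 : ℝ) + 3 ^ 20 := by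
  have hX0 : 0 ≤ X := by linarith
  set B := (sIcc (X ^ (1 / 100 : ℝ)) ×ˢ sIcc (X ^ (1 / 100 : ℝ))) ×ˢ
    (sIcc (X ^ (1 / 2 : ℝ)) ×ˢ sIcc (X ^ (3 / 10 : ℝ)) ×ˢ sIcc (X ^ (4 / 25 : ℝ))) with hB
  set T := (Finset.Ico (0 : ℤ) (3 ^ 20)) ∪ B.image badMap with hT
  have hcard := card_le_of_nth (P := fun k => nseq k ≤ X ∧ ¬ GoodPt (nseq k)) T ?_
  · have h1 : T.card ≤ 3 ^ 20 + B.card := by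
      refine (card_union_le _ _).trans (add_le_add ?_ card_image_le)
      rw [Int.card_Ico]; norm_num
    have h2 : (B.card : ℝ) ≤ 243 * X ^ (98 / 100 : ℝ) := by
      rw [hB]
      simp only [card_product]
      push_cast
      have c1 := card_sIcc (Real.one_le_rpow hX (show (0 : ℝ) ≤ 1 / 100 by norm_num))
      have c2 := card_sIcc (Real.one_le_rpow hX (show (0 : ℝ) ≤ 1 / 2 by norm_num))
      have c3 := card_sIcc (Real.one_le_rpow hX (show (0 : ℝ) ≤ 3 / 10 by norm_num))
      have c4 := card_sIcc (Real.one_le_rpow hX (show (0 : ℝ) ≤ 4 / 25 by norm_num))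
      calc _ ≤ (3 * X ^ (1 / 100 : ℝ)) * (3 * X ^ (1 / 100 : ℝ)) *
            ((3 * X ^ (1 / 2 : ℝ)) * ((3 * X ^ (3 / 10 : ℝ)) * (3 * X ^ (4 / 25 : ℝ)))) := by gcongr
        _ = 243 * (X ^ (1 / 100 : ℝ) * X ^ (1 / 100 : ℝ) * X ^ (1 / 2 : ℝ) * X ^ (3 / 10 : ℝ) * X ^ (4 / 25 : ℝ)) := by ring
        _ = _ := by
          have hXp : 0 < X := by linarith
          rw [← Real.rpow_add hXp, ← Real.rpow_add hXp, ← Real.rpow_add hXp, ← Real.rpow_add hXp]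
          norm_num
    have h3 : (Nat.card {k : ℕ // nseq k ≤ X ∧ ¬ GoodPt (nseq k)} : ℝ) ≤ 3 ^ 20 + B.card := by
      exact_mod_cast hcard.trans h1
    linarith
  · rintro k ⟨hk, hbad⟩
    set m := Nat.nth IsSum2Sq k with hm
    have hmk : nseq k = 4 * Real.pi ^ 2 * (m : ℝ) := rfl
    have hlb := four_pi_sq_lb
    have hm0 : (0 : ℝ) ≤ m := by positivity
    rw [hT, mem_union]
    by_cases hsmall : (3 : ℝ) ^ 20 ≤ nseq k
    swap
    · left
      push Not at hsmall
      rw [Finset.mem_Ico]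
      refine ⟨by positivity, ?_⟩
      have : (m : ℝ) < 3 ^ 20 := by nlinarith
      exact_mod_cast this
    right
    have hex : ∃ ζ : Fin 2 → ℤ, ζ ≠ 0 ∧ znorm ζ ≤ (nseq k) ^ (1 / 100 : ℝ) ∧
      ∃ ξ : Fin 2 → ℤ, |qf ξ - nseq k| ≤ (nseq k) ^ (4 / 25 : ℝ) ∧
        |((ξ 0 * ζ 0 + ξ 1 * ζ 1 : ℤ) : ℝ)| < (nseq k) ^ (3 / 10 : ℝ) := by
      by_contra hcon
      apply hbad
      refine ⟨hsmall, fun ζ h0 h1 ξ h2 => ?_⟩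
      by_contra h3
      exact hcon ⟨ζ, h0, h1, ξ, h2, not_le.1 h3⟩
    obtain ⟨ζ, h0, h1, ξ, h2, h3⟩ := hex
    have hx1 : 1 ≤ nseq k := le_trans (by norm_num) hsmall
    have hx0 : 0 ≤ nseq k := by linarith
    have mono : ∀ e : ℝ, 0 ≤ e → nseq k ^ e ≤ X ^ e := fun e he => Real.rpow_le_rpow hx0 hk he
    set r : ℤ := (m : ℤ) - (ξ 0 ^ 2 + ξ 1 ^ 2) with hr
    have hrb : |(r : ℝ)| ≤ X ^ (4 / 25 : ℝ) := by
      have e : qf ξ - nseq k = 4 * Real.pi ^ 2 * (-(r : ℝ)) := by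
        rw [hmk, qf, Fin.sum_univ_two, hr]; push_cast; ring
      rw [e, abs_mul, abs_neg, abs_of_nonneg (by positivity)] at h2
      have := mono (4 / 25) (by norm_num)
      nlinarith [abs_nonneg (r : ℝ)]
    have hz : ∀ i, ζ i ∈ sIcc (X ^ (1 / 100 : ℝ)) := fun i =>
      mem_sIcc ((abs_le_znorm ζ i).trans (h1.trans (mono _ (by norm_num))))
    have hxi : ∀ i, ξ i ∈ sIcc (X ^ (1 / 2 : ℝ)) := fun i =>
      mem_sIcc ((coord_bound hx1 ξ h2 i).trans (mono _ (by norm_num)))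
    have hs := mem_sIcc (h3.le.trans (mono (3 / 10) (by norm_num)))
    have hrm := mem_sIcc hrb
    rw [mem_image]
    by_cases hz1 : ζ 1 = 0
    · refine ⟨((ζ 0, ζ 1), (ξ 1, ξ 0 * ζ 0 + ξ 1 * ζ 1, r)), ?_, ?_⟩
      · simp only [hB, mem_product]
        exact ⟨⟨hz 0, hz 1⟩, hxi 1, hs, hrm⟩
      · have hz0 : ζ 0 ≠ 0 := by
          intro h
          apply h0
          funext i
          fin_cases i
          · exact h
          · exact hz1
        simp only [badMap, hz1, if_true, mul_zero, add_zero]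
        rw [Int.mul_ediv_cancel _ hz0, hr]; ring
    · refine ⟨((ζ 0, ζ 1), (ξ 0, ξ 0 * ζ 0 + ξ 1 * ζ 1, r)), ?_, ?_⟩
      · simp only [hB, mem_product]
        exact ⟨⟨hz 0, hz 1⟩, hxi 0, hs, hrm⟩
      · simp only [badMap, hz1, if_false]
        rw [show ξ 0 * ζ 0 + ξ 1 * ζ 1 - ξ 0 * ζ 0 = ξ 1 * ζ 1 by ring, Int.mul_ediv_cancel _ hz1, hr]; ring

/-- The density-one set. -/
def goodSet : Set ℝ := {x | x ∈ Sset ∧ GoodPt x}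

lemma count_split (X : ℝ) : countLE Sset X =
    countLE goodSet X + Nat.card {k : ℕ // nseq k ≤ X ∧ ¬ GoodPt (nseq k)} := by
  have hf := nseq_le_finite X
  have e1 : countLE Sset X = {k : ℕ | nseq k ≤ X}.ncard := by
    rw [countLE, ← Nat.card_coe_set_eq]
    apply Nat.card_congr
    exact Equiv.subtypeEquivRight fun k => ⟨fun h => h.2, fun h => ⟨⟨k, rfl⟩, h⟩⟩
  have e2 : countLE goodSet X = {k : ℕ | nseq k ≤ X ∧ GoodPt (nseq k)}.ncard := by
    rw [countLE, ← Nat.card_coe_set_eq]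
    apply Nat.card_congr
    exact Equiv.subtypeEquivRight fun k => ⟨fun h => ⟨h.2, h.1.2⟩, fun h => ⟨⟨⟨k, rfl⟩, h.2⟩, h.1⟩⟩
  have e3 : Nat.card {k : ℕ // nseq k ≤ X ∧ ¬ GoodPt (nseq k)} =
      {k : ℕ | nseq k ≤ X ∧ ¬ GoodPt (nseq k)}.ncard := by
    rw [← Nat.card_coe_set_eq]; rfl
  have f1 : {k : ℕ | nseq k ≤ X ∧ GoodPt (nseq k)}.Finite := hf.subset fun k h => h.1
  have f2 : {k : ℕ | nseq k ≤ X ∧ ¬ GoodPt (nseq k)}.Finite := hf.subset fun k h => h.1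
  rw [e1, e2, e3, ← Set.ncard_union_eq (hs := f1) (ht := f2)]
  · congr 1
    ext k
    constructor
    · intro h
      by_cases hg : GoodPt (nseq k)
      · exact Or.inl ⟨h, hg⟩
      · exact Or.inr ⟨h, hg⟩
    · rintro (h | h) <;> exact h.1
  · rw [Set.disjoint_left]
    intro k h h'
    exact h'.2 h.2

lemma goodSet_density : HasDensityOne goodSet := by
  have hlim : Tendsto (fun X : ℝ => (243 * 2916 + 3 ^ 20 * 2916) * X ^ (-(1 / 100 : ℝ))) atTop (nhds 0) := by
    have := (tendsto_rpow_neg_atTop (y := 1 / 100) (by norm_num)).const_mul (243 * 2916 + 3 ^ 20 * 2916 : ℝ)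
    simpa using this
  have hlow : Tendsto (fun X : ℝ => 1 - (243 * 2916 + 3 ^ 20 * 2916) * X ^ (-(1 / 100 : ℝ))) atTop (nhds 1) := by
    simpa using tendsto_const_nhds.sub hlim
  refine tendsto_of_tendsto_of_tendsto_of_le_of_le' hlow tendsto_const_nhds ?_ ?_
  · filter_upwards [total_lower, eventually_ge_atTop 1] with X h1 hX
    have hXp : 0 < X := by linarith
    have h2 := bad_upper X hX
    have h3 : (countLE Sset X : ℝ) = countLE goodSet X + (Nat.card {k : ℕ // nseq k ≤ X ∧ ¬ GoodPt (nseq k)} : ℝ) := by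
      exact_mod_cast count_split X
    have hp : 0 < X ^ (99 / 100 : ℝ) := by positivity
    have ht : (0 : ℝ) < countLE Sset X := lt_of_lt_of_le (by positivity) h1
    rw [le_div_iff₀ ht]
    have e : X ^ (99 / 100 : ℝ) * X ^ (-(1 / 100 : ℝ)) = X ^ (98 / 100 : ℝ) := by
      rw [← Real.rpow_add hXp]; norm_num
    have h1' : X ^ (98 / 100 : ℝ) ≥ 1 := Real.one_le_rpow hX (by norm_num)
    have hn : 0 < X ^ (-(1 / 100 : ℝ)) := by positivity
    have h4 : X ^ (98 / 100 : ℝ) / 2916 ≤ X ^ (-(1 / 100 : ℝ)) * countLE Sset X := by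
      rw [← e]
      calc _ = X ^ (-(1 / 100 : ℝ)) * (X ^ (99 / 100 : ℝ) / 2916) := by ring
        _ ≤ _ := by gcongr
    nlinarith
  · filter_upwards with X
    apply div_le_one_of_le₀ _ (by positivity)
    exact_mod_cast (by rw [count_split X]; omega : countLE goodSet X ≤ countLE Sset X)

lemma gap_bound (k : ℕ) (hx : 1 ≤ nseq k) :
    nseq (k + 1) - nseq k ≤ 120 * nseq k ^ (1 / 4 : ℝ) := by
  set m := Nat.nth IsSum2Sq k with hm
  set a := Nat.sqrt m with ha
  set r := m - a * a with hr
  set q := Nat.sqrt r with hq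
  have ha1 : a * a ≤ m := Nat.sqrt_le m
  have ha2 : m ≤ a * a + a + a := Nat.sqrt_le_add m
  have hq1 : q * q ≤ r := Nat.sqrt_le r
  have hq2 : r < (q + 1) * (q + 1) := Nat.lt_succ_sqrt r
  have hs : IsSum2Sq (a ^ 2 + (q + 1) ^ 2) := ⟨a, q + 1, by push_cast; ring⟩
  have hgt : m < a ^ 2 + (q + 1) ^ 2 := by
    have : m = r + a * a := by omega
    nlinarith
  have hle : Nat.nth IsSum2Sq (k + 1) ≤ a ^ 2 + (q + 1) ^ 2 := by
    by_contra hcon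
    push Not at hcon
    have := Nat.le_nth_of_lt_nth_succ hcon hs
    omega
  have hle2 : Nat.nth IsSum2Sq (k + 1) ≤ m + 2 * q + 1 := by
    have : m = r + a * a := by omega
    nlinarith
  have hq4 : q ^ 4 ≤ 4 * m := by
    have h1 : q * q ≤ 2 * a := by omega
    calc q ^ 4 = (q * q) * (q * q) := by ring
      _ ≤ (2 * a) * (2 * a) := Nat.mul_le_mul h1 h1
      _ = 4 * (a * a) := by ring
      _ ≤ _ := by omega
  have hub := four_pi_sq_ub
  have hlb := four_pi_sq_lb
  have hmk := nth_le_nseq k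
  have hq4' : (q : ℝ) ^ 4 ≤ nseq k := by
    have : (q : ℝ) ^ 4 ≤ 4 * m := by exact_mod_cast hq4
    have hm0 : (0 : ℝ) ≤ m := by positivity
    rw [← hm] at hmk
    linarith
  have hq5 : (q : ℝ) ≤ nseq k ^ (1 / 4 : ℝ) := by
    have h := Real.rpow_le_rpow (by positivity) hq4' (show (0 : ℝ) ≤ 1 / 4 by norm_num)
    rwa [← Real.rpow_natCast, ← Real.rpow_mul (by positivity),
      show ((4 : ℕ) : ℝ) * (1 / 4) = 1 by norm_num, Real.rpow_one] at h
  have h1 : 1 ≤ nseq k ^ (1 / 4 : ℝ) := Real.one_le_rpow hx (by norm_num)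
  have hle3 : (Nat.nth IsSum2Sq (k + 1) : ℝ) ≤ m + 2 * q + 1 := by exact_mod_cast hle2
  calc nseq (k + 1) - nseq k = 4 * Real.pi ^ 2 * ((Nat.nth IsSum2Sq (k + 1) : ℝ) - m) := by
        simp only [nseq]; ring
    _ ≤ 4 * Real.pi ^ 2 * (2 * q + 1) := by gcongr; linarith
    _ ≤ 40 * (2 * q + 1) := by gcongr
    _ ≤ _ := by linarith

lemma separation {x : ℝ} (hx : (3 : ℝ) ^ 20 ≤ x) (ξ ζ : Fin 2 → ℤ)
    (h1 : |qf ξ - x| ≤ x ^ (4 / 25 : ℝ)) (h2 : znorm ζ ≤ x ^ (1 / 100 : ℝ))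
    (h3 : x ^ (3 / 10 : ℝ) ≤ |((ξ 0 * ζ 0 + ξ 1 * ζ 1 : ℤ) : ℝ)|) :
    x ^ (3 / 10 : ℝ) + 120 * x ^ (1 / 4 : ℝ) ≤ |qf (ξ + ζ) - x| := by
  have hx1 : 1 ≤ x := le_trans (by norm_num) hx
  have hx0 : 0 ≤ x := by linarith
  have hxp : 0 < x := by linarith
  have hub := four_pi_sq_ub
  have hlb := four_pi_sq_lb
  set s : ℝ := ((ξ 0 * ζ 0 + ξ 1 * ζ 1 : ℤ) : ℝ) with hs
  set z : ℝ := ∑ i, (ζ i : ℝ) ^ 2 with hz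
  have hz0 : 0 ≤ z := sum_nonneg fun _ _ => sq_nonneg _
  have hz1 : z ≤ x ^ (1 / 4 : ℝ) := by
    have e : znorm ζ ^ 2 = z := Real.sq_sqrt hz0
    have n0 : 0 ≤ znorm ζ := Real.sqrt_nonneg _
    calc z = znorm ζ ^ 2 := e.symm
      _ ≤ (x ^ (1 / 100 : ℝ)) ^ 2 := by gcongr
      _ = x ^ (1 / 50 : ℝ) := by rw [← Real.rpow_natCast, ← Real.rpow_mul hx0]; norm_num
      _ ≤ _ := Real.rpow_le_rpow_of_exponent_le hx1 (by norm_num)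
  have e : qf (ξ + ζ) - x = 4 * Real.pi ^ 2 * (2 * s) + ((qf ξ - x) + 4 * Real.pi ^ 2 * z) := by
    rw [hs, hz]
    simp only [qf, Fin.sum_univ_two, Pi.add_apply]
    push_cast
    ring
  have b1 : |4 * Real.pi ^ 2 * (2 * s)| ≥ 72 * x ^ (3 / 10 : ℝ) := by
    rw [abs_mul, abs_of_nonneg (by positivity : 0 ≤ 4 * Real.pi ^ 2), abs_mul, abs_two]
    have : 0 ≤ x ^ (3 / 10 : ℝ) := by positivity
    nlinarith
  have b2 : |(qf ξ - x) + 4 * Real.pi ^ 2 * z| ≤ 41 * x ^ (1 / 4 : ℝ) := by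
    refine (abs_add_le _ _).trans ?_
    have c1 : x ^ (4 / 25 : ℝ) ≤ x ^ (1 / 4 : ℝ) := Real.rpow_le_rpow_of_exponent_le hx1 (by norm_num)
    rw [abs_of_nonneg (by positivity : 0 ≤ 4 * Real.pi ^ 2 * z)]
    have : 4 * Real.pi ^ 2 * z ≤ 40 * x ^ (1 / 4 : ℝ) := by gcongr
    linarith
  have b3 : 3 * x ^ (1 / 4 : ℝ) ≤ x ^ (3 / 10 : ℝ) := by
    have c : (3 : ℝ) ≤ x ^ (1 / 20 : ℝ) := by
      have h := Real.rpow_le_rpow (by positivity) hx (show (0 : ℝ) ≤ 1 / 20 by norm_num)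
      rwa [← Real.rpow_natCast, ← Real.rpow_mul (by positivity),
        show ((20 : ℕ) : ℝ) * (1 / 20) = 1 by norm_num, Real.rpow_one] at h
    have e2 : x ^ (3 / 10 : ℝ) = x ^ (1 / 20 : ℝ) * x ^ (1 / 4 : ℝ) := by
      rw [← Real.rpow_add hxp]; norm_num
    rw [e2]; gcongr
  have b4 := abs_sub_abs_le_abs_add (4 * Real.pi ^ 2 * (2 * s)) ((qf ξ - x) + 4 * Real.pi ^ 2 * z)
  rw [e]
  have : 0 ≤ x ^ (1 / 4 : ℝ) := by positivity
  linarith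

/-- Integers whose squares lie in a short interval. -/
lemma sq_interval_card (F : Finset ℤ) (y : ℝ) (hy : 1 ≤ y)
    (h : ∀ b ∈ F, ∀ c ∈ F, (b : ℝ) ^ 2 - (c : ℝ) ^ 2 ≤ y ^ 2) : (F.card : ℝ) ≤ 4 * y := by
  rcases F.eq_empty_or_nonempty with rfl | hne
  · simp; linarith
  obtain ⟨c, hc, hmin⟩ := exists_min_image F (fun b => |b|) hne
  have hfl : (1 : ℤ) ≤ ⌊y⌋ := Int.le_floor.2 (by simpa using hy)
  have hfl2 : (⌊y⌋ : ℝ) ≤ y := Int.floor_le y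
  have hsub : F ⊆ Icc |c| (|c| + ⌊y⌋) ∪ Icc (-|c| - ⌊y⌋) (-|c|) := by
    intro b hb
    have h1 : |c| ≤ |b| := hmin b hb
    have h2 : |b| - |c| ≤ ⌊y⌋ := by
      apply Int.le_floor.2
      push_cast
      have h1' : |(c : ℝ)| ≤ |(b : ℝ)| := by exact_mod_cast h1
      have h3 := h b hb c hc
      rw [← sq_abs (b : ℝ), ← sq_abs (c : ℝ)] at h3
      have h4 := abs_nonneg (c : ℝ)
      apply abs_le_of_sq_le_sq' _ (by linarith) |>.2
      nlinarith
    rw [mem_union, Finset.mem_Icc, Finset.mem_Icc]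
    rcases abs_cases b with ⟨hb1, hb2⟩ | ⟨hb1, hb2⟩
    · left; omega
    · right; omega
  have hcard : (F.card : ℤ) ≤ 2 * (⌊y⌋ + 1) := by
    have h1 := (card_le_card hsub).trans (card_union_le _ _)
    rw [Int.card_Icc, Int.card_Icc] at h1
    omega
  have : (F.card : ℝ) ≤ 2 * (⌊y⌋ + 1) := by exact_mod_cast hcard
  linarith

lemma annulus_card {x : ℝ} (hx : 1 ≤ x) : ∃ A : Finset (Fin 2 → ℤ),
    (∀ ξ, |qf ξ - x| ≤ x ^ (4 / 25 : ℝ) → ξ ∈ A) ∧ (A.card : ℝ) ≤ 12 * x ^ (29 / 50 : ℝ) := by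
  classical
  have hxp : 0 < x := by linarith
  have hlb := four_pi_sq_lb
  set I := sIcc (x ^ (1 / 2 : ℝ)) with hI
  set B : ℤ → Finset ℤ := fun a => I.filter fun b => |qf ![a, b] - x| ≤ x ^ (4 / 25 : ℝ) with hB
  refine ⟨I.biUnion fun a => (B a).image fun b => ![a, b], ?_, ?_⟩
  · intro ξ h
    have e : ![ξ 0, ξ 1] = ξ := by
      funext i; fin_cases i <;> rfl
    rw [mem_biUnion]
    refine ⟨ξ 0, mem_sIcc (coord_bound hx ξ h 0), mem_image.2 ⟨ξ 1, ?_, e⟩⟩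
    rw [hB, mem_filter, e]
    exact ⟨mem_sIcc (coord_bound hx ξ h 1), h⟩
  · have hBc : ∀ a, ((B a).card : ℝ) ≤ 4 * x ^ (2 / 25 : ℝ) := by
      intro a
      apply sq_interval_card _ _ (Real.one_le_rpow hx (by norm_num))
      intro b hb c hc
      simp only [hB, mem_filter, qf, Fin.sum_univ_two, abs_le] at hb hc
      simp only [Matrix.cons_val_zero, Matrix.cons_val_one] at hb hc
      have e : (x ^ (2 / 25 : ℝ)) ^ 2 = x ^ (4 / 25 : ℝ) := by
        rw [← Real.rpow_natCast, ← Real.rpow_mul hxp.le]; norm_num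
      rw [e]
      have h1 := hb.2.2
      have h2 := hc.2.1
      have h3 : 4 * Real.pi ^ 2 * ((b : ℝ) ^ 2 - (c : ℝ) ^ 2) ≤ 2 * x ^ (4 / 25 : ℝ) := by linarith
      have h4 : 0 ≤ x ^ (4 / 25 : ℝ) := by positivity
      by_contra hcon
      push Not at hcon
      nlinarith
    have h1 : ((I.biUnion fun a => (B a).image fun b => ![a, b]).card : ℝ) ≤ ∑ a ∈ I, ((B a).card : ℝ) := by
      have : (I.biUnion fun a => (B a).image fun b => ![a, b]).card ≤ ∑ a ∈ I, (B a).card :=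
        card_biUnion_le.trans (sum_le_sum fun a _ => card_image_le)
      exact_mod_cast this
    refine h1.trans ((sum_le_sum fun a _ => hBc a).trans ?_)
    rw [sum_const, nsmul_eq_mul]
    have hc := card_sIcc (Real.one_le_rpow hx (show (0 : ℝ) ≤ 1 / 2 by norm_num))
    calc _ ≤ (3 * x ^ (1 / 2 : ℝ)) * (4 * x ^ (2 / 25 : ℝ)) := by gcongr
      _ = 12 * (x ^ (1 / 2 : ℝ) * x ^ (2 / 25 : ℝ)) := by ring
      _ = _ := by rw [← Real.rpow_add hxp]; norm_num

lemma tsum_ite_le (A : Finset (Fin 2 → ℤ)) (P : (Fin 2 → ℤ) → Prop) [DecidablePred P]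
    (f : (Fin 2 → ℤ) → ℝ) (c : ℝ) (hc : 0 ≤ c) (hA : ∀ ξ, P ξ → ξ ∈ A) (hf : ∀ ξ, P ξ → f ξ ≤ c) :
    (∑' ξ, if P ξ then f ξ else 0) ≤ A.card * c := by
  rw [tsum_eq_sum (s := A)]
  · rw [← nsmul_eq_mul]
    apply sum_le_card_nsmul
    intro ξ _
    split_ifs with h
    · exact hf ξ h
    · exact hc
  · intro ξ hξ
    rw [if_neg]
    exact fun h => hξ (hA ξ h)

lemma inv_sq_le {y T : ℝ} (hT : 0 < T) (h : T ≤ |y|) : (y ^ 2)⁻¹ ≤ (T ^ 2)⁻¹ := by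
  rw [← sq_abs y]
  gcongr

/-- On a density-one subsequence of `S`, the lattice sum `Σ(ζ, n_k)` is
`O_ε'(n_k^{θ − 2δ + ε'})` uniformly over `0 ≠ |ζ| ≤ n_k^ε`. -/
theorem sigma_sum_bound :
    ∃ δ ε : ℝ, δ ∈ Set.Ioo (θH / 2) (1/2 - θH) ∧ 0 < ε ∧
    ∃ S' : Set ℝ, S' ⊆ Sset ∧ HasDensityOne S' ∧
      ∀ ε' : ℝ, 0 < ε' → ∃ C : ℝ, 0 < C ∧
        ∀ k : ℕ, nseq k ∈ S' →
        ∀ ζ : Fin 2 → ℤ, ζ ≠ 0 → znorm ζ ≤ (nseq k) ^ ε →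
          SigmaSum ζ (nseq k) (nseq (k + 1)) ((nseq k) ^ δ)
            ≤ C * (nseq k) ^ (θH - 2 * δ + ε') := by
  refine ⟨4 / 25, 1 / 100, ?_, by norm_num, goodSet, fun x hx => hx.1, goodSet_density, ?_⟩
  · unfold θH
    constructor <;> norm_num
  intro ε' hε'
  refine ⟨24, by norm_num, ?_⟩
  intro k hk ζ hζ hζn
  obtain ⟨-, hx, hgood⟩ := hk
  have hgap := gap_bound k (le_trans (by norm_num) hx)
  set x := nseq k with hxdef
  have hx1 : 1 ≤ x := le_trans (by norm_num) hx
  have hxp : 0 < x := by linarith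
  obtain ⟨A, hA, hAc⟩ := annulus_card hx1
  have hT : 0 < x ^ (3 / 10 : ℝ) := by positivity
  have hq : 0 ≤ x ^ (1 / 4 : ℝ) := by positivity
  have hTc : 0 ≤ ((x ^ (3 / 10 : ℝ)) ^ 2)⁻¹ := by positivity
  have s1 := tsum_ite_le A (fun ξ => |qf ξ - x| ≤ x ^ (4 / 25 : ℝ) ∧ qf (ξ + ζ) < x)
    (fun ξ => ((qf (ξ + ζ) - x) ^ 2)⁻¹) _ hTc (fun ξ h => hA ξ h.1) (by
      intro ξ h
      have := separation hx ξ ζ h.1 hζn (hgood ζ hζ hζn ξ h.1)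
      exact inv_sq_le hT (by linarith))
  have s2 := tsum_ite_le A (fun ξ => |qf ξ - x| ≤ x ^ (4 / 25 : ℝ) ∧ nseq (k + 1) < qf (ξ + ζ))
    (fun ξ => ((qf (ξ + ζ) - nseq (k + 1)) ^ 2)⁻¹) _ hTc (fun ξ h => hA ξ h.1) (by
      intro ξ h
      have h1 := separation hx ξ ζ h.1 hζn (hgood ζ hζ hζn ξ h.1)
      have h2 : x ≤ nseq (k + 1) := by
        rw [hxdef]
        unfold nseq
        have := Nat.nth_monotone sum2Sq_infinite (Nat.le_succ k)
        gcongr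
      have h3 := h.2
      rw [abs_of_nonneg (by linarith)] at h1
      exact inv_sq_le hT (by rw [abs_of_nonneg (by linarith)]; linarith))
  have e : x ^ (29 / 50 : ℝ) * ((x ^ (3 / 10 : ℝ)) ^ 2)⁻¹ = x ^ (-(1 / 50) : ℝ) := by
    rw [← Real.rpow_natCast, ← Real.rpow_mul hxp.le, ← Real.rpow_neg hxp.le, ← Real.rpow_add hxp]
    norm_num
  have hfin : x ^ (-(1 / 50) : ℝ) ≤ x ^ (θH - 2 * (4 / 25) + ε') := by
    apply Real.rpow_le_rpow_of_exponent_le hx1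
    unfold θH
    linarith
  have hAT : (A.card : ℝ) * ((x ^ (3 / 10 : ℝ)) ^ 2)⁻¹ ≤ 12 * x ^ (-(1 / 50) : ℝ) := by
    rw [← e, ← mul_assoc]
    gcongr
  unfold SigmaSum
  calc _ ≤ _ := add_le_add s1 s2
    _ ≤ 24 * x ^ (-(1 / 50) : ℝ) := by linarith
    _ ≤ _ := by gcongr
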